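/- Let χ ∈ ℤ¹⁰ be the vector (1,1,1,1,1,0,0,0,0,0), the indicator vector of the shaded regions, and let 𝟙 ∈ ℤ¹⁰ be the all-ones vector. Then for every x ∈ ℤ¹⁰ with M·x = 0 (matrix–vector multiplication over ℤ), there exist integers a and b such that x = a·𝟙 + b·χ. (Over ℤ, every Dehn coloring of the diagram is an integer combination of the trivial coloring and the checkerboard coloring.) -/

import Mathlib

/-- The Dehn coloring matrix of the standard 8-crossing diagram of the knot 8₁₉. -/
def M : Matrix (Fin 8) (Fin 10) ℤ :=
  !![-1,  1,  0,  0,  0, -1,  1,  0,  0,  0;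
      0, -1,  0,  1,  0,  0, -1,  1,  0,  0;
     -1,  0,  0,  0,  1,  1,  0,  0,  0, -1;
      0,  0,  1,  0, -1, -1,  0,  1,  0,  0;
     -1,  0,  0,  1,  0,  0, -1,  0,  1,  0;
      0,  0,  0, -1,  1,  0,  0,  1, -1,  0;
      0,  1, -1,  0,  0, -1,  0,  1,  0,  0;
     -1,  0,  0,  0,  1,  0,  0,  0, -1,  1]

/-- The indicator vector of the shaded regions. -/
def chi : Fin 10 → ℤ := ![1, 1, 1, 1, 1, 0, 0, 0, 0, 0]

/-!
With colors in any abelian group, put `t = x 6 - x 7`. Seven of the crossing relations express every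
color through `x 0`, `x 7` and `t`; the eighth then reads `3 • t = 0`, where `3` is the determinant
of the knot. So a coloring is a combination of the trivial and checkerboard colorings plus a
3-torsion multiple of one further vector, and this last term vanishes in a group without 3-torsion.
-/

/-- A Dehn coloring of the diagram with colors in an abelian group `A`: region `j` is colored
`x j`, and every row of `M` annihilates `x`. Since `A` need not be a ring, the product of `M` and
`x` is written with the integer scalar action. -/
def IsDehnColoring {A : Type*} [AddCommGroup A] (x : Fin 10 → A) : Prop :=
  ∀ i, ∑ j, M i j • x j = 0

/-- A Dehn coloring modulo 3 that is independent of the trivial and checkerboard ones, normalized to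
vanish on the regions `0` and `7`. It is lifted to the integers so that only the crossing relation
of the last row of `M` fails over `ℤ`. -/
def modThreeColoring : Fin 10 → ℤ := ![0, -3, -1, -2, 1, -2, 1, 0, 3, -1]

theorem isDehnColoring_iff_mulVec_eq_zero (x : Fin 10 → ℤ) :
    IsDehnColoring x ↔ M.mulVec x = 0 :=
  funext_iff.symm

namespace IsDehnColoring

variable {A : Type*} [AddCommGroup A] {x : Fin 10 → A}

theorem crossing_relations (hx : IsDehnColoring x) :
    x 1 - x 0 = x 5 - x 6 ∧ x 3 - x 1 = x 6 - x 7 ∧ x 4 - x 0 = x 9 - x 5 ∧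
    x 2 - x 4 = x 5 - x 7 ∧ x 3 - x 0 = x 6 - x 8 ∧ x 4 - x 3 = x 8 - x 7 ∧
    x 1 - x 2 = x 5 - x 7 ∧ x 4 - x 0 = x 8 - x 9 := by
  refine ⟨?_, ?_, ?_, ?_, ?_, ?_, ?_, ?_⟩
  · linear_combination (norm := (simp [M, Fin.sum_univ_succ]; abel)) hx 0
  · linear_combination (norm := (simp [M, Fin.sum_univ_succ]; abel)) hx 1
  · linear_combination (norm := (simp [M, Fin.sum_univ_succ]; abel)) hx 2
  · linear_combination (norm := (simp [M, Fin.sum_univ_succ]; abel)) hx 3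
  · linear_combination (norm := (simp [M, Fin.sum_univ_succ]; abel)) hx 4
  · linear_combination (norm := (simp [M, Fin.sum_univ_succ]; abel)) hx 5
  · linear_combination (norm := (simp [M, Fin.sum_univ_succ]; abel)) hx 6
  · linear_combination (norm := (simp [M, Fin.sum_univ_succ]; abel)) hx 7

theorem apply_four_sub_apply_zero (hx : IsDehnColoring x) : x 4 - x 0 = x 6 - x 7 := by
  obtain ⟨-, -, -, -, h₄, h₅, -, -⟩ := hx.crossing_relations
  linear_combination (norm := abel) h₄ + h₅

theorem apply_five_sub_apply_seven (hx : IsDehnColoring x) :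
    x 5 - x 7 = (-2 : ℤ) • (x 6 - x 7) := by
  obtain ⟨h₀, -, -, h₃, -, -, h₆, -⟩ := hx.crossing_relations
  linear_combination (norm := module) h₀ - h₃ - h₆ - hx.apply_four_sub_apply_zero

theorem apply_eight_sub_apply_seven (hx : IsDehnColoring x) :
    x 8 - x 7 = (3 : ℤ) • (x 6 - x 7) := by
  obtain ⟨h₀, h₁, -, -, h₄, -, -, -⟩ := hx.crossing_relations
  linear_combination (norm := module) h₄ - h₀ - h₁ - hx.apply_five_sub_apply_seven

theorem apply_nine_sub_apply_seven (hx : IsDehnColoring x) :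
    x 9 - x 7 = -(x 6 - x 7) := by
  obtain ⟨-, -, h₂, -, -, -, -, -⟩ := hx.crossing_relations
  linear_combination (norm := module)
    hx.apply_five_sub_apply_seven + hx.apply_four_sub_apply_zero - h₂

theorem three_zsmul_apply_six_sub_apply_seven (hx : IsDehnColoring x) :
    (3 : ℤ) • (x 6 - x 7) = 0 := by
  obtain ⟨-, -, -, -, -, -, -, h₇⟩ := hx.crossing_relations
  linear_combination (norm := module)
    hx.apply_four_sub_apply_zero - h₇ - hx.apply_eight_sub_apply_seven +
      hx.apply_nine_sub_apply_seven

theorem apply_one_sub_apply_zero (hx : IsDehnColoring x) :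
    x 1 - x 0 = (-3 : ℤ) • (x 6 - x 7) := by
  obtain ⟨h₀, -, -, -, -, -, -, -⟩ := hx.crossing_relations
  linear_combination (norm := module) h₀ + hx.apply_five_sub_apply_seven

theorem apply_two_sub_apply_zero (hx : IsDehnColoring x) : x 2 - x 0 = -(x 6 - x 7) := by
  obtain ⟨-, -, -, h₃, -, -, -, -⟩ := hx.crossing_relations
  linear_combination (norm := module)
    h₃ + hx.apply_four_sub_apply_zero + hx.apply_five_sub_apply_seven

theorem apply_three_sub_apply_zero (hx : IsDehnColoring x) :
    x 3 - x 0 = (-2 : ℤ) • (x 6 - x 7) := by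
  obtain ⟨-, -, -, -, h₄, -, -, -⟩ := hx.crossing_relations
  linear_combination (norm := module) h₄ - hx.apply_eight_sub_apply_seven

theorem apply_eq_add_chi_add_modThreeColoring (hx : IsDehnColoring x) (j : Fin 10) :
    x j = x 7 + chi j • (x 0 - x 7) + modThreeColoring j • (x 6 - x 7) := by
  have h10 := hx.apply_one_sub_apply_zero
  have h20 := hx.apply_two_sub_apply_zero
  have h30 := hx.apply_three_sub_apply_zero
  have h40 := hx.apply_four_sub_apply_zero
  have h57 := hx.apply_five_sub_apply_seven
  have h87 := hx.apply_eight_sub_apply_seven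
  have h97 := hx.apply_nine_sub_apply_seven
  fin_cases j <;>
    simp only [chi, modThreeColoring, Fin.zero_eta, Fin.mk_one, Fin.reduceFinMk, Matrix.cons_val,
      zero_smul, one_smul, add_zero, add_sub_cancel] <;>
    grind

end IsDehnColoring

theorem stmt11_general {A : Type*} [AddCommGroup A]
    (no_three_torsion : ∀ t : A, (3 : ℤ) • t = 0 → t = 0) {x : Fin 10 → A} (hx : IsDehnColoring x) :
    ∃ a b : A, ∀ j, x j = a + chi j • b := by
  have ht : x 6 - x 7 = 0 := no_three_torsion _ hx.three_zsmul_apply_six_sub_apply_seven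
  refine ⟨x 7, x 0 - x 7, fun j => ?_⟩
  simpa only [ht, smul_zero, add_zero] using hx.apply_eq_add_chi_add_modThreeColoring j

/-- Over `ℤ`, every Dehn coloring of the diagram is an integer combination of
the trivial coloring (all-ones vector) and the checkerboard coloring `chi`. -/
theorem stmt11 (x : Fin 10 → ℤ) (hx : M.mulVec x = 0) :
    ∃ a b : ℤ, x = a • (fun _ => 1 : Fin 10 → ℤ) + b • chi := by
  obtain ⟨a, b, hab⟩ :=
    stmt11_general (by lia) ((isDehnColoring_iff_mulVec_eq_zero x).mpr hx)
  exact ⟨a, b, funext fun j => by simp [hab j, mul_comm]⟩
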